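/- arXiv:1804.10409 — 2 statements merged into one kernel-verified Lean document; each statement's English description precedes it below -/
import Mathlib

section
/- In the digroup Disgp⟨X^{±1} ∪ {e} | S⟩ with unit the class of [e]_1, for every normal form [q]_n ∈ Ω_e ∪ Ω_X ∪ Ω_{X⁻¹}, the inverse (class of [q]_n)† equals the class of [e(q̂)⁻¹]_1 if the formal inverse (q̂)⁻¹ of the reduced word q̂ lies in X*, and equals the class of [(q̂)⁻¹]_{λ((q̂)⁻¹)} otherwise. -/
/-- The alphabet X^{±1} ∪ {e}: letters x, x⁻¹ (for x ∈ X) and the symbol e. -/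
inductive Letter (X : Type*) : Type _
  | pos : X → Letter X
  | neg : X → Letter X
  | e   : Letter X

/-- The free disemigroup on Y: an element [u]_m (u a nonempty word, 1 ≤ m ≤ |u|)
is encoded as the triple (prefix before the center, center letter, suffix),
so `⟨p, c, s⟩` stands for `[p·c·s]_{|p|+1}`. -/
structure FD (Y : Type*) where
  pre : List Y
  cen : Y
  suf : List Y

namespace FD

/-- [u]_m ⊢ [v]_n = [uv]_{|u|+n}. -/
def vd {Y : Type*} (a b : FD Y) : FD Y :=
  ⟨a.pre ++ a.cen :: (a.suf ++ b.pre), b.cen, b.suf⟩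

/-- [u]_m ⊣ [v]_n = [uv]_m. -/
def dv {Y : Type*} (a b : FD Y) : FD Y :=
  ⟨a.pre, a.cen, a.suf ++ b.pre ++ b.cen :: b.suf⟩

/-- The underlying associative word of [u]_m. -/
def word {Y : Type*} (a : FD Y) : List Y := a.pre ++ a.cen :: a.suf

end FD

/-- The congruence ρ(r) on the free disemigroup generated by a set of relations r:
the smallest equivalence relation containing r compatible with ⊢ and ⊣. -/
inductive DCongr {Y : Type*} (r : FD Y → FD Y → Prop) : FD Y → FD Y → Prop
  | of {a b : FD Y} : r a b → DCongr r a b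
  | refl (a : FD Y) : DCongr r a a
  | symm {a b : FD Y} : DCongr r a b → DCongr r b a
  | trans {a b c : FD Y} : DCongr r a b → DCongr r b c → DCongr r a c
  | vd {a b c d : FD Y} : DCongr r a b → DCongr r c d → DCongr r (a.vd c) (b.vd d)
  | dv {a b c d : FD Y} : DCongr r a b → DCongr r c d → DCongr r (a.dv c) (b.dv d)

/-- The defining relations S of the free digroup:
[xx⁻¹]₂ = [e]₁, [x⁻¹x]₁ = [e]₁, [ye]₁ = [y]₁, [ey]₂ = [y]₁. -/
def rel (X : Type*) : FD (Letter X) → FD (Letter X) → Prop := fun a b =>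
  (∃ x : X, a = ⟨[Letter.pos x], Letter.neg x, []⟩ ∧ b = ⟨[], Letter.e, []⟩) ∨
  (∃ x : X, a = ⟨[], Letter.neg x, [Letter.pos x]⟩ ∧ b = ⟨[], Letter.e, []⟩) ∨
  (∃ y : Letter X, a = ⟨[], y, [Letter.e]⟩ ∧ b = ⟨[], y, []⟩) ∨
  (∃ y : Letter X, a = ⟨[Letter.e], y, []⟩ ∧ b = ⟨[], y, []⟩)

/-- The quotient disemigroup Disgp⟨X^{±1} ∪ {e} | S⟩. -/
def DQ (X : Type*) := Quot (DCongr (rel X))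

/-- The class of an element of the free disemigroup in the quotient. -/
def cls {X : Type*} (a : FD (Letter X)) : DQ X := Quot.mk _ a

/-- The operation ⊢ on the quotient. -/
def DQ.vd {X : Type*} : DQ X → DQ X → DQ X :=
  Quot.map₂ FD.vd (fun a _ _ h => DCongr.vd (DCongr.refl a) h)
    (fun _ _ b h => DCongr.vd h (DCongr.refl b))

/-- The operation ⊣ on the quotient. -/
def DQ.dv {X : Type*} : DQ X → DQ X → DQ X :=
  Quot.map₂ FD.dv (fun a _ _ h => DCongr.dv (DCongr.refl a) h)
    (fun _ _ b h => DCongr.dv h (DCongr.refl b))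

/-- The class of [e]₁, the unit of the free digroup. -/
def unitE (X : Type*) : DQ X := cls ⟨[], Letter.e, []⟩

/-- Words over X^{±1} are lists of pairs (x, b), where (x, true) is x and
(x, false) is x⁻¹, as for `FreeGroup`. This converts such a pair to a `Letter`. -/
def pm {X : Type*} (p : X × Bool) : Letter X :=
  if p.2 then Letter.pos p.1 else Letter.neg p.1

/-- A word over X^{±1} is reduced (lies in gp⟨X⟩) if it has no adjacent pair
of mutually inverse letters. -/
def Reduced {X : Type*} (L : List (X × Bool)) : Prop :=
  List.Chain' (fun a b => ¬(a.1 = b.1 ∧ a.2 = !b.2)) L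

/-- Delete all occurrences of e from a word over X^{±1} ∪ {e} (the map τ). -/
def strip {X : Type*} (L : List (Letter X)) : List (X × Bool) :=
  L.flatMap fun l => match l with
    | Letter.pos x => [(x, true)]
    | Letter.neg x => [(x, false)]
    | Letter.e => []

/-- ŵ: the reduced word of w, obtained by deleting the e's and freely reducing. -/
noncomputable def hat {X : Type*} (L : List (Letter X)) : List (X × Bool) :=
  letI := Classical.decEq X
  FreeGroup.reduce (strip L)

/-- λ(w): the (1-based) position of the first letter of w lying in X⁻¹. -/
def lam {X : Type*} (L : List (X × Bool)) : ℕ := L.findIdx (fun p => !p.2) + 1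

/-- The element [L]_m of the free disemigroup determined by a word L over X^{±1}
and a center position m. -/
def toNF {X : Type*} (L : List (X × Bool)) (m : ℕ) : FD (Letter X) :=
  ⟨(L.take (m - 1)).map pm, ((L[m-1]?).map pm).getD Letter.e, (L.drop m).map pm⟩

/-- Ω_e = {[eu]₁ : u ∈ X*}. -/
def OmegaE (X : Type*) : Set (FD (Letter X)) :=
  {a | ∃ u : List X, a = ⟨[], Letter.e, u.map Letter.pos⟩}

/-- Ω_X = {[uxv]_{|u|+1} : x ∈ X, u, v ∈ gp⟨X⟩}. -/
def OmegaX (X : Type*) : Set (FD (Letter X)) :=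
  {a | ∃ (x : X) (u v : List (X × Bool)), Reduced u ∧ Reduced v ∧
    a = ⟨u.map pm, Letter.pos x, v.map pm⟩}

/-- Ω_{X⁻¹} = {[ux⁻¹v]_{|u|+1} : x ∈ X, u ∈ X*, v ∈ (X^{±1})*, ux⁻¹v reduced}. -/
def OmegaInv (X : Type*) : Set (FD (Letter X)) :=
  {a | ∃ (x : X) (u : List X) (v : List (X × Bool)),
    Reduced ((u.map fun y => (y, true)) ++ (x, false) :: v) ∧
    a = ⟨u.map Letter.pos, Letter.neg x, v.map pm⟩}

/-- Inversion of a single letter. -/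
def linv {X : Type*} : Letter X → Letter X
  | Letter.pos x => Letter.neg x
  | Letter.neg x => Letter.pos x
  | Letter.e => Letter.e

/-- The formal inverse w⁻¹ of a word over X^{±1}. -/
def invw {X : Type*} (L : List (X × Bool)) : List (X × Bool) :=
  L.reverse.map fun p => (p.1, !p.2)

namespace DCongr

variable {X : Type*}

/-- The congruence is compatible with enlarging the prefix and the suffix. -/
theorem context {Y : Type*} {r : FD Y → FD Y → Prop} {a b : FD Y} (h : DCongr r a b)
    (p s : List Y) :
    DCongr r ⟨p ++ a.pre, a.cen, a.suf ++ s⟩ ⟨p ++ b.pre, b.cen, b.suf ++ s⟩ := by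
  have left : DCongr r ⟨p ++ a.pre, a.cen, a.suf⟩ ⟨p ++ b.pre, b.cen, b.suf⟩ := by
    cases p with
    | nil => exact h
    | cons y p => simpa [FD.vd] using DCongr.vd (DCongr.refl ⟨[], y, p⟩) h
  cases s with
  | nil => simpa using left
  | cons y s => simpa [FD.dv] using DCongr.dv left (DCongr.refl ⟨[], y, s⟩)

/-- Congruent elements have interchangeable words inside a suffix. -/
theorem replace_suf {Y : Type*} {r : FD Y → FD Y → Prop} {a b : FD Y} (h : DCongr r a b)
    (p : List Y) (c : Y) (s t : List Y) :
    DCongr r ⟨p, c, s ++ a.word ++ t⟩ ⟨p, c, s ++ b.word ++ t⟩ := by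
  simpa [FD.dv, FD.word] using context (DCongr.dv (DCongr.refl ⟨p, c, s⟩) h) [] t

theorem pos_neg (x : X) :
    DCongr (rel X) ⟨[Letter.pos x], Letter.neg x, []⟩ ⟨[], Letter.e, []⟩ :=
  .of (Or.inl ⟨x, rfl, rfl⟩)

theorem neg_pos (x : X) :
    DCongr (rel X) ⟨[], Letter.neg x, [Letter.pos x]⟩ ⟨[], Letter.e, []⟩ :=
  .of (Or.inr (Or.inl ⟨x, rfl, rfl⟩))

theorem letter_e (y : Letter X) : DCongr (rel X) ⟨[], y, [Letter.e]⟩ ⟨[], y, []⟩ :=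
  .of (Or.inr (Or.inr (Or.inl ⟨y, rfl, rfl⟩)))

theorem e_letter (y : Letter X) : DCongr (rel X) ⟨[Letter.e], y, []⟩ ⟨[], y, []⟩ :=
  .of (Or.inr (Or.inr (Or.inr ⟨y, rfl, rfl⟩)))

/-- The symbol `e` may be deleted anywhere in the suffix. -/
theorem suf_e (p : List (Letter X)) (c : Letter X) (s t : List (Letter X)) :
    DCongr (rel X) ⟨p, c, s ++ Letter.e :: t⟩ ⟨p, c, s ++ t⟩ := by
  rcases List.eq_nil_or_concat s with rfl | ⟨s, y, rfl⟩
  · simpa using context (letter_e c) p t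
  · simpa [FD.word] using replace_suf (letter_e y) p c s t

theorem neg_congr_pre (x : X) :
    DCongr (rel X) ⟨[], Letter.neg x, []⟩ ⟨[Letter.neg x], Letter.e, []⟩ := by
  have h₁ : DCongr (rel X) ⟨[Letter.neg x, Letter.pos x], Letter.neg x, []⟩
      ⟨[Letter.neg x], Letter.e, []⟩ := by
    simpa using context (pos_neg x) [Letter.neg x] []
  have h₂ : DCongr (rel X) ⟨[Letter.neg x, Letter.pos x], Letter.neg x, []⟩
      ⟨[Letter.e], Letter.neg x, []⟩ := by
    simpa [FD.vd] using DCongr.vd (neg_pos x) (DCongr.refl ⟨[], Letter.neg x, []⟩)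
  exact (e_letter _).symm.trans (h₂.symm.trans h₁)

theorem neg_congr_suf (x : X) :
    DCongr (rel X) ⟨[], Letter.neg x, []⟩ ⟨[], Letter.e, [Letter.neg x]⟩ := by
  have h₁ : DCongr (rel X) ⟨[], Letter.neg x, [Letter.pos x, Letter.neg x]⟩
      ⟨[], Letter.e, [Letter.neg x]⟩ := by
    simpa using context (neg_pos x) [] [Letter.neg x]
  have h₂ : DCongr (rel X) ⟨[], Letter.neg x, [Letter.pos x, Letter.neg x]⟩
      ⟨[], Letter.neg x, [Letter.e]⟩ := by
    simpa [FD.dv] using DCongr.dv (DCongr.refl ⟨[], Letter.neg x, []⟩) (pos_neg x)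
  exact (letter_e _).symm.trans (h₂.symm.trans h₁)

/-- The center `e` commutes with every letter. -/
theorem center_e_comm (y : Letter X) :
    DCongr (rel X) ⟨[y], Letter.e, []⟩ ⟨[], Letter.e, [y]⟩ := by
  have hneg (x : X) := (neg_congr_pre x).symm.trans (neg_congr_suf x)
  cases y with
  | neg x => exact hneg x
  | e => exact (e_letter _).trans (letter_e _).symm
  | pos x =>
    have h₁ : DCongr (rel X) ⟨[Letter.pos x], Letter.e, [Letter.neg x, Letter.pos x]⟩
        ⟨[Letter.pos x], Letter.e, []⟩ :=
      (replace_suf (neg_pos x) [Letter.pos x] Letter.e [] []).trans (suf_e _ _ [] [])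
    have h₂ : DCongr (rel X) ⟨[Letter.pos x, Letter.neg x], Letter.e, [Letter.pos x]⟩
        ⟨[Letter.pos x], Letter.e, [Letter.neg x, Letter.pos x]⟩ := by
      simpa using context (hneg x) [Letter.pos x] [Letter.pos x]
    have h₃ : DCongr (rel X) ⟨[Letter.pos x, Letter.neg x], Letter.e, [Letter.pos x]⟩
        ⟨[Letter.e], Letter.e, [Letter.pos x]⟩ := by
      simpa [FD.vd] using DCongr.vd (pos_neg x) (DCongr.refl ⟨[], Letter.e, [Letter.pos x]⟩)
    have h₄ : DCongr (rel X) ⟨[Letter.e], Letter.e, [Letter.pos x]⟩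
        ⟨[], Letter.e, [Letter.pos x]⟩ := by
      simpa using context (e_letter Letter.e) [] [Letter.pos x]
    exact h₁.symm.trans (h₂.symm.trans (h₃.trans h₄))

/-- The center `e` can be moved to the front of a word. -/
theorem center_e_front (p s : List (Letter X)) :
    DCongr (rel X) ⟨p, Letter.e, s⟩ ⟨[], Letter.e, p ++ s⟩ := by
  induction p using List.reverseRecOn generalizing s with
  | nil => exact .refl _
  | append_singleton p y ih =>
    have h : DCongr (rel X) ⟨p ++ [y], Letter.e, s⟩ ⟨p, Letter.e, y :: s⟩ := by
      simpa using context (center_e_comm y) p s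
    simpa using h.trans (ih (y :: s))

/-- A center in `X⁻¹` can be replaced by a center `e` at the front of the word. -/
theorem center_neg_front (x : X) (p s : List (Letter X)) :
    DCongr (rel X) ⟨p, Letter.neg x, s⟩ ⟨[], Letter.e, p ++ Letter.neg x :: s⟩ := by
  have h : DCongr (rel X) ⟨p, Letter.neg x, s⟩ ⟨p, Letter.e, Letter.neg x :: s⟩ := by
    simpa using context (neg_congr_suf x) p s
  exact h.trans (center_e_front _ _)

/-- Deleting all occurrences of `e` from the suffix does not change the class. -/
theorem map_pm_strip (p : List (Letter X)) (c : Letter X) (s t : List (Letter X)) :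
    DCongr (rel X) ⟨p, c, s ++ t⟩ ⟨p, c, s ++ (strip t).map pm⟩ := by
  induction t generalizing s with
  | nil => exact .refl _
  | cons y t ih =>
    cases y with
    | pos x => simpa [strip, pm] using ih (s ++ [Letter.pos x])
    | neg x => simpa [strip, pm] using ih (s ++ [Letter.neg x])
    | e => simpa [strip] using (suf_e p c s t).trans (ih s)

/-- Free reduction inside the suffix does not change the class. -/
theorem red_step {L M : List (X × Bool)} (h : FreeGroup.Red.Step L M)
    (p : List (Letter X)) (c : Letter X) :
    DCongr (rel X) ⟨p, c, L.map pm⟩ ⟨p, c, M.map pm⟩ := by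
  cases h with
  | @not L M x b =>
    have key {a : FD (Letter X)} (ha : DCongr (rel X) a ⟨[], Letter.e, []⟩) :
        DCongr (rel X) ⟨p, c, L.map pm ++ a.word ++ M.map pm⟩
          ⟨p, c, L.map pm ++ M.map pm⟩ :=
      (replace_suf ha p c (L.map pm) (M.map pm)).trans
        (by simpa [FD.word] using suf_e p c (L.map pm) (M.map pm))
    cases b
    · simpa [FD.word, pm] using key (neg_pos x)
    · simpa [FD.word, pm] using key (pos_neg x)

end DCongr

section

variable {X : Type*}

/-- The class of `[e·g]₁`, for `g` in the free group. -/
def unitMul : FreeGroup X → DQ X :=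
  Quot.lift (fun L => cls ⟨[], Letter.e, L.map pm⟩)
    fun _ _ h => Quot.sound (DCongr.red_step h _ _)

/-- The class of an element with center `e` depends only on the free group element
represented by its word. -/
theorem cls_center_e (p s : List (Letter X)) :
    cls ⟨p, Letter.e, s⟩ = unitMul (FreeGroup.mk (strip (p ++ s))) :=
  Quot.sound ((DCongr.center_e_front p s).trans (DCongr.map_pm_strip [] Letter.e [] (p ++ s)))

theorem strip_map_pm (L : List (X × Bool)) : strip (L.map pm) = L := by
  induction L with
  | nil => rfl
  | cons a L ih =>
    obtain ⟨x, b⟩ := a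
    cases b <;> simpa [strip, pm] using ih

theorem strip_append (s t : List (Letter X)) : strip (s ++ t) = strip s ++ strip t := by
  simp [strip]

theorem mk_invw_hat (w : List (Letter X)) :
    FreeGroup.mk (invw (hat w)) = (FreeGroup.mk (strip w))⁻¹ := by
  let := Classical.decEq X
  have h : FreeGroup.mk (hat w) = FreeGroup.mk (strip w) := FreeGroup.reduce.self
  rw [← h, FreeGroup.inv_mk]
  simp [invw, FreeGroup.invRev]

/-- If `L ∉ X*`, then `[L]_{λ(L)}` and `[eL]₁` have the same class. -/
theorem cls_toNF_lam (L : List (X × Bool)) (hL : ¬ L.all (fun a => a.2)) :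
    cls (toNF L (lam L)) = cls ⟨[], Letter.e, L.map pm⟩ := by
  have hlt : L.findIdx (fun p => !p.2) < L.length := by
    rw [List.findIdx_lt_length]
    simpa using hL
  have hcen := List.findIdx_getElem (w := hlt)
  set i := L.findIdx (fun p => !p.2) with hi
  have hpm : pm L[i] = Letter.neg L[i].1 := by
    have hsign : L[i].2 = false := by simpa using hcen
    simp [pm, hsign]
  have hword : (L.take i).map pm ++ Letter.neg L[i].1 :: (L.drop (i + 1)).map pm = L.map pm := by
    rw [← hpm, ← List.map_cons, ← List.drop_eq_getElem_cons hlt, ← List.map_append,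
      List.take_append_drop]
  have hNF : toNF L (lam L) =
      ⟨(L.take i).map pm, Letter.neg L[i].1, (L.drop (i + 1)).map pm⟩ := by
    simp [toNF, lam, ← hi, List.getElem?_eq_getElem hlt, hpm]
  rw [hNF, ← hword]
  exact Quot.sound (DCongr.center_neg_front _ _ _)

theorem dv_unitE (b : DQ X) : DQ.dv b (unitE X) = b := by
  obtain ⟨b, rfl⟩ := Quot.exists_rep b
  refine Quot.sound ?_
  simpa [FD.dv] using DCongr.suf_e b.pre b.cen b.suf []

theorem dv_vd (a b c : DQ X) : DQ.dv a (DQ.vd b c) = DQ.dv (DQ.dv a b) c := by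
  obtain ⟨a, rfl⟩ := Quot.exists_rep a
  obtain ⟨b, rfl⟩ := Quot.exists_rep b
  obtain ⟨c, rfl⟩ := Quot.exists_rep c
  exact congrArg cls (by simp [FD.dv, FD.vd])

theorem unitE_dv_unitMul (g : FreeGroup X) : DQ.dv (unitE X) (unitMul g) = unitMul g := by
  obtain ⟨L, rfl⟩ := Quot.exists_rep g
  exact Quot.sound (DCongr.suf_e [] Letter.e [] (L.map pm))

theorem vd_unitMul (q : FD (Letter X)) (L : List (X × Bool)) :
    DQ.vd (cls q) (unitMul (FreeGroup.mk L)) =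
      unitMul (FreeGroup.mk (strip q.word) * FreeGroup.mk L) := by
  change cls (q.vd ⟨[], Letter.e, L.map pm⟩) = _
  simp only [FD.vd]
  rw [cls_center_e, strip_append, strip_map_pm, ← FreeGroup.mul_mk]
  simp [FD.word]

theorem unitMul_dv (q : FD (Letter X)) (L : List (X × Bool)) :
    DQ.dv (unitMul (FreeGroup.mk L)) (cls q) =
      unitMul (FreeGroup.mk L * FreeGroup.mk (strip q.word)) := by
  change cls (FD.dv ⟨[], Letter.e, L.map pm⟩ q) = _
  simp only [FD.dv]
  rw [cls_center_e, List.nil_append, List.append_assoc, strip_append, strip_map_pm,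
    ← FreeGroup.mul_mk]
  rfl

end

/-- The inverse in the digroup Disgp⟨X^{±1} ∪ {e} | S⟩: for a normal form
[q]_n, the unique two-sided inverse of its class is the class of
[e(q̂)⁻¹]₁ if (q̂)⁻¹ ∈ X*, and of [(q̂)⁻¹]_{λ((q̂)⁻¹)} otherwise. -/
theorem dag_of_normal_form (X : Type*) (q : FD (Letter X))
    (hq : q ∈ OmegaE X ∪ OmegaX X ∪ OmegaInv X) :
    DQ.vd (cls q)
        (if (invw (hat q.word)).all (fun a => a.2) then
          cls ⟨[], Letter.e, (invw (hat q.word)).map pm⟩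
        else cls (toNF (invw (hat q.word)) (lam (invw (hat q.word))))) = unitE X ∧
    DQ.dv
        (if (invw (hat q.word)).all (fun a => a.2) then
          cls ⟨[], Letter.e, (invw (hat q.word)).map pm⟩
        else cls (toNF (invw (hat q.word)) (lam (invw (hat q.word)))))
        (cls q) = unitE X ∧
    ∀ b : DQ X, DQ.vd (cls q) b = unitE X → DQ.dv b (cls q) = unitE X →
      b = (if (invw (hat q.word)).all (fun a => a.2) then
            cls ⟨[], Letter.e, (invw (hat q.word)).map pm⟩
          else cls (toNF (invw (hat q.word)) (lam (invw (hat q.word))))) := by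
  have hdag : (if (invw (hat q.word)).all (fun a => a.2) then
      cls ⟨[], Letter.e, (invw (hat q.word)).map pm⟩
      else cls (toNF (invw (hat q.word)) (lam (invw (hat q.word))))) =
      unitMul (FreeGroup.mk (invw (hat q.word))) := by
    split_ifs with h
    · rfl
    · exact cls_toNF_lam _ h
  have hright : DQ.vd (cls q) (unitMul (FreeGroup.mk (invw (hat q.word)))) = unitE X := by
    rw [vd_unitMul, mk_invw_hat, mul_inv_cancel]
    rfl
  rw [hdag]
  refine ⟨hright, ?_, fun b _ hb => ?_⟩
  · rw [unitMul_dv, mk_invw_hat, inv_mul_cancel]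
    rfl
  · rw [← dv_unitE b, ← hright, dv_vd, hb, unitE_dv_unitMul]
end

section
/- Let X = {x} be a one-element set. In the free digroup Disgp⟨X^{±1} ∪ {e} | S⟩ on {x}: every element is the class of exactly one element of Ω_e ∪ Ω_x ∪ Ω_{x⁻¹}, where Ω_e = {[ex^n]_1 : n ≥ 0}, Ω_x = {[x^i x x^j]_{|i|+1} : i, j ∈ ℤ} and Ω_{x⁻¹} = {[x^{−m}]_1 : m ≥ 1}; moreover the group part J is {class of [ex^n]_1 : n ≥ 0} ∪ {class of [x^{−m}]_1 : m ≥ 1}, and the halo E is {class of [e]_1} ∪ {class of [x^{−n}x^n]_{n+1} : n ≥ 1} ∪ {class of [x^n x^{−n}]_n : n ≥ 1}. -/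
/-- For i ∈ ℤ, the word x^i over {x}^{±1}: i copies of x if i ≥ 0,
|i| copies of x⁻¹ if i < 0. -/
def zw (i : ℤ) : List (Letter Unit) :=
  if 0 ≤ i then List.replicate i.toNat (Letter.pos ())
  else List.replicate (-i).toNat (Letter.neg ())

/-- Ω_e = {[ex^n]₁ : n ≥ 0} in the one-generator case. -/
def OmE1 : Set (FD (Letter Unit)) :=
  {a | ∃ n : ℕ, a = ⟨[], Letter.e, List.replicate n (Letter.pos ())⟩}

/-- Ω_x = {[x^i x x^j]_{|i|+1} : i, j ∈ ℤ}. -/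
def OmX1 : Set (FD (Letter Unit)) :=
  {a | ∃ i j : ℤ, a = ⟨zw i, Letter.pos (), zw j⟩}

/-- Ω_{x⁻¹} = {[x^{−m}]₁ : m ≥ 1}. -/
def OmI1 : Set (FD (Letter Unit)) :=
  {a | ∃ m : ℕ, 1 ≤ m ∧ a = ⟨[], Letter.neg (), List.replicate (m - 1) (Letter.neg ())⟩}

/-- The exponent of a letter over `{x}^{±1} ∪ {e}`. -/
def letterDeg : Letter Unit → ℤ
  | Letter.pos _ => 1
  | Letter.neg _ => -1
  | Letter.e => 0

/-- The exponent sum of a word over `{x}^{±1} ∪ {e}`. -/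
def wordDeg (L : List (Letter Unit)) : ℤ := (L.map letterDeg).sum

@[simp] theorem wordDeg_nil : wordDeg [] = 0 := rfl

@[simp] theorem wordDeg_cons (y : Letter Unit) (L : List (Letter Unit)) :
    wordDeg (y :: L) = letterDeg y + wordDeg L := by simp [wordDeg]

@[simp] theorem wordDeg_append (L M : List (Letter Unit)) :
    wordDeg (L ++ M) = wordDeg L + wordDeg M := by simp [wordDeg]

@[simp] theorem wordDeg_replicate (n : ℕ) (y : Letter Unit) :
    wordDeg (List.replicate n y) = n * letterDeg y := by simp [wordDeg]

@[simp] theorem letterDeg_pos (x : Unit) : letterDeg (Letter.pos x) = 1 := rfl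

@[simp] theorem letterDeg_neg (x : Unit) : letterDeg (Letter.neg x) = -1 := rfl

@[simp] theorem letterDeg_e : letterDeg Letter.e = 0 := rfl

@[simp] theorem wordDeg_zw (i : ℤ) : wordDeg (zw i) = i := by
  unfold zw
  split_ifs <;> simp <;> omega

theorem zw_natCast (n : ℕ) : zw n = List.replicate n (Letter.pos ()) := by
  simp [zw]

theorem zw_neg_natCast (n : ℕ) : zw (-n) = List.replicate n (Letter.neg ()) := by
  rcases n with _ | n
  · simp [zw]
  · rw [zw, if_neg (by omega)]
    congr 1

/-- The halo coordinate of an element with center `c` and prefix of exponent sum `d`. -/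
def haloCoord (d : ℤ) : Letter Unit → Option ℤ
  | Letter.pos _ => some d
  | _ => none

/-- The homomorphism from the free disemigroup to `ℤ × Option ℤ`, where `ℤ` is the free group on
one generator and acts on `Option ℤ` by translations that fix `none`. -/
def coord (a : FD (Letter Unit)) : ℤ × Option ℤ :=
  (wordDeg a.word, haloCoord (wordDeg a.pre) a.cen)

theorem coord_mk (p s : List (Letter Unit)) (c : Letter Unit) :
    coord ⟨p, c, s⟩ = (wordDeg p + (letterDeg c + wordDeg s), haloCoord (wordDeg p) c) := by
  simp [coord, FD.word]

theorem haloCoord_add (d k : ℤ) (c : Letter Unit) :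
    haloCoord (d + k) c = (haloCoord k c).map (d + ·) := by
  cases c <;> rfl

theorem coord_vd (a b : FD (Letter Unit)) :
    coord (a.vd b) = ((coord a).1 + (coord b).1, (coord b).2.map ((coord a).1 + ·)) := by
  obtain ⟨p, c, s⟩ := a
  obtain ⟨q, d, t⟩ := b
  simp only [FD.vd, coord_mk, ← haloCoord_add, wordDeg_append, wordDeg_cons, Prod.mk.injEq]
  exact ⟨by ring, by congr 1; ring⟩

theorem coord_dv (a b : FD (Letter Unit)) :
    coord (a.dv b) = ((coord a).1 + (coord b).1, (coord a).2) := by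
  obtain ⟨p, c, s⟩ := a
  obtain ⟨q, d, t⟩ := b
  simp only [FD.dv, coord_mk, wordDeg_append, wordDeg_cons, Prod.mk.injEq, and_true]
  ring

theorem coord_eq_of_congr {a b : FD (Letter Unit)} (h : DCongr (rel Unit) a b) :
    coord a = coord b := by
  induction h with
  | of h =>
    rcases h with ⟨x, rfl, rfl⟩ | ⟨x, rfl, rfl⟩ | ⟨y, rfl, rfl⟩ | ⟨y, rfl, rfl⟩ <;>
      simp [coord_mk, haloCoord]
  | refl => rfl
  | symm _ ih => exact ih.symm
  | trans _ _ ih₁ ih₂ => exact ih₁.trans ih₂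
  | vd _ _ ih₁ ih₂ => rw [coord_vd, coord_vd, ih₁, ih₂]
  | dv _ _ ih₁ ih₂ => rw [coord_dv, coord_dv, ih₁, ih₂]

section Congruence

variable {X : Type*}

theorem congr_cons_pre (y : Letter X) {p q s t : List (Letter X)} {c d : Letter X}
    (h : DCongr (rel X) ⟨p, c, s⟩ ⟨q, d, t⟩) :
    DCongr (rel X) ⟨y :: p, c, s⟩ ⟨y :: q, d, t⟩ :=
  DCongr.vd (DCongr.refl ⟨[], y, []⟩) h

theorem congr_append_suf (r : List (Letter X)) {p q s t : List (Letter X)} {c d : Letter X}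
    (h : DCongr (rel X) ⟨p, c, s⟩ ⟨q, d, t⟩) :
    DCongr (rel X) ⟨p, c, s ++ r⟩ ⟨q, d, t ++ r⟩ := by
  rcases r with _ | ⟨y, r⟩
  · simpa using h
  · simpa [FD.dv] using DCongr.dv h (DCongr.refl ⟨[], y, r⟩)

theorem congr_append_pre (r : List (Letter X)) {p q s t : List (Letter X)} {c d : Letter X}
    (h : DCongr (rel X) ⟨p, c, s⟩ ⟨q, d, t⟩) :
    DCongr (rel X) ⟨r ++ p, c, s⟩ ⟨r ++ q, d, t⟩ := by
  induction r with
  | nil => exact h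
  | cons y r ih => exact congr_cons_pre y ih

theorem congr_pos_neg (x : X) :
    DCongr (rel X) ⟨[Letter.pos x], Letter.neg x, []⟩ ⟨[], Letter.e, []⟩ :=
  .of (.inl ⟨x, rfl, rfl⟩)

theorem congr_neg_pos (x : X) :
    DCongr (rel X) ⟨[], Letter.neg x, [Letter.pos x]⟩ ⟨[], Letter.e, []⟩ :=
  .of (.inr (.inl ⟨x, rfl, rfl⟩))

theorem congr_letter_e (y : Letter X) :
    DCongr (rel X) ⟨[], y, [Letter.e]⟩ ⟨[], y, []⟩ :=
  .of (.inr (.inr (.inl ⟨y, rfl, rfl⟩)))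

theorem congr_e_letter (y : Letter X) :
    DCongr (rel X) ⟨[Letter.e], y, []⟩ ⟨[], y, []⟩ :=
  .of (.inr (.inr (.inr ⟨y, rfl, rfl⟩)))

theorem congr_e_pre (p s : List (Letter X)) (c : Letter X) :
    DCongr (rel X) ⟨Letter.e :: p, c, s⟩ ⟨p, c, s⟩ := by
  rcases p with _ | ⟨y, p⟩
  · exact congr_append_suf s (congr_e_letter c)
  · exact DCongr.vd (congr_e_letter y) (DCongr.refl ⟨p, c, s⟩)

theorem congr_suf_e (p s : List (Letter X)) (c : Letter X) :
    DCongr (rel X) ⟨p, c, s ++ [Letter.e]⟩ ⟨p, c, s⟩ := by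
  rcases List.eq_nil_or_concat s with rfl | ⟨s, y, rfl⟩
  · simpa using congr_append_pre p (congr_letter_e c)
  · simpa [FD.dv] using DCongr.dv (DCongr.refl ⟨p, c, s⟩) (congr_letter_e y)

theorem congr_cancel_pos_neg_pre (x : X) (p s : List (Letter X)) (c : Letter X) :
    DCongr (rel X) ⟨Letter.pos x :: Letter.neg x :: p, c, s⟩ ⟨p, c, s⟩ :=
  (DCongr.vd (congr_pos_neg x) (DCongr.refl ⟨p, c, s⟩)).trans (congr_e_pre p s c)

theorem congr_cancel_neg_pos_pre (x : X) (p s : List (Letter X)) (c : Letter X) :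
    DCongr (rel X) ⟨Letter.neg x :: Letter.pos x :: p, c, s⟩ ⟨p, c, s⟩ :=
  (DCongr.vd (congr_neg_pos x) (DCongr.refl ⟨p, c, s⟩)).trans (congr_e_pre p s c)

theorem congr_cancel_pos_neg_suf (x : X) (p s : List (Letter X)) (c : Letter X) :
    DCongr (rel X) ⟨p, c, s ++ [Letter.pos x, Letter.neg x]⟩ ⟨p, c, s⟩ := by
  have h := DCongr.dv (DCongr.refl ⟨p, c, s⟩) (congr_pos_neg x)
  simp only [FD.dv, List.append_assoc, List.nil_append, List.singleton_append] at h
  exact h.trans (congr_suf_e p s c)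

theorem congr_cancel_neg_pos_suf (x : X) (p s : List (Letter X)) (c : Letter X) :
    DCongr (rel X) ⟨p, c, s ++ [Letter.neg x, Letter.pos x]⟩ ⟨p, c, s⟩ := by
  have h := DCongr.dv (DCongr.refl ⟨p, c, s⟩) (congr_neg_pos x)
  simp only [FD.dv, List.append_assoc, List.nil_append] at h
  exact h.trans (congr_suf_e p s c)

theorem congr_neg_cen (x : X) (p s : List (Letter X)) :
    DCongr (rel X) ⟨p, Letter.neg x, s⟩ ⟨p ++ [Letter.neg x], Letter.e, s⟩ := by
  have h := (congr_cancel_neg_pos_pre x [] [] (Letter.neg x)).symm.trans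
    (congr_cons_pre (Letter.neg x) (congr_pos_neg x))
  simpa using congr_append_pre p (congr_append_suf s h)

theorem congr_pos_e (x : X) (p s : List (Letter X)) :
    DCongr (rel X) ⟨p ++ [Letter.pos x], Letter.e, s⟩ ⟨p, Letter.e, Letter.pos x :: s⟩ := by
  have h := (congr_cons_pre (Letter.pos x) (congr_neg_pos x)).symm.trans
    (congr_append_suf [Letter.pos x] (congr_pos_neg x))
  simpa using congr_append_pre p (congr_append_suf s h)

theorem congr_neg_e (x : X) (p s : List (Letter X)) :
    DCongr (rel X) ⟨p ++ [Letter.neg x], Letter.e, s⟩ ⟨p, Letter.e, Letter.neg x :: s⟩ := by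
  have h := (congr_cancel_pos_neg_suf x [Letter.neg x] [] Letter.e).symm.trans
    ((congr_append_suf [Letter.neg x] (congr_pos_e x [Letter.neg x] [])).symm.trans
      (congr_cancel_neg_pos_pre x [] [Letter.neg x] Letter.e))
  simpa using congr_append_pre p (congr_append_suf s h)

/-- A prefix can be moved across a center `e`. -/
theorem congr_pre_e (p s : List (Letter X)) :
    DCongr (rel X) ⟨p, Letter.e, s⟩ ⟨[], Letter.e, p ++ s⟩ := by
  induction p using List.reverseRecOn generalizing s with
  | nil => exact DCongr.refl _
  | append_singleton p y ih =>
    rw [List.append_assoc]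
    refine DCongr.trans ?_ (ih _)
    cases y with
    | pos x => exact congr_pos_e x p s
    | neg x => exact congr_neg_e x p s
    | e =>
      have h := (congr_e_pre [] [] Letter.e).trans (congr_suf_e [] [] (Letter.e : Letter X)).symm
      simpa using congr_append_pre p (congr_append_suf s h)

end Congruence

theorem pos_cons_zw {i : ℤ} (hi : 0 ≤ i) : Letter.pos () :: zw i = zw (1 + i) := by
  lift i to ℕ using hi
  rw [show (1 + i : ℤ) = ((i + 1 : ℕ) : ℤ) by push_cast; ring, zw_natCast, zw_natCast,
    List.replicate_succ]

theorem neg_cons_zw {i : ℤ} (hi : i ≤ 0) : Letter.neg () :: zw i = zw (-1 + i) := by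
  obtain ⟨n, rfl⟩ : ∃ n : ℕ, i = -n := ⟨(-i).toNat, by omega⟩
  rw [show (-1 + -n : ℤ) = -((n + 1 : ℕ) : ℤ) by push_cast; ring, zw_neg_natCast, zw_neg_natCast,
    List.replicate_succ]

theorem zw_append_pos {i : ℤ} (hi : 0 ≤ i) : zw i ++ [Letter.pos ()] = zw (i + 1) := by
  lift i to ℕ using hi
  rw [show (i + 1 : ℤ) = ((i + 1 : ℕ) : ℤ) by push_cast; ring, zw_natCast, zw_natCast,
    List.replicate_succ']

theorem zw_append_neg {i : ℤ} (hi : i ≤ 0) : zw i ++ [Letter.neg ()] = zw (i + -1) := by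
  obtain ⟨n, rfl⟩ : ∃ n : ℕ, i = -n := ⟨(-i).toNat, by omega⟩
  rw [show (-n + -1 : ℤ) = -((n + 1 : ℕ) : ℤ) by push_cast; ring, zw_neg_natCast, zw_neg_natCast,
    List.replicate_succ']

/-- A prefix can be replaced by the reduced word with the same exponent sum. -/
theorem congr_zw_pre (p s : List (Letter Unit)) (c : Letter Unit) :
    DCongr (rel Unit) ⟨p, c, s⟩ ⟨zw (wordDeg p), c, s⟩ := by
  induction p with
  | nil => exact DCongr.refl _
  | cons y p ih =>
    refine (congr_cons_pre y ih).trans ?_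
    rw [wordDeg_cons]
    generalize wordDeg p = d
    match y with
    | Letter.e =>
      rw [letterDeg_e, zero_add]
      exact congr_e_pre _ _ _
    | Letter.pos () =>
      rw [letterDeg_pos]
      rcases le_or_gt 0 d with hd | hd
      · rw [pos_cons_zw hd]
        exact DCongr.refl _
      · have h := neg_cons_zw (i := 1 + d) (by omega)
        rw [neg_add_cancel_left] at h
        rw [← h]
        exact congr_cancel_pos_neg_pre _ _ _ _
    | Letter.neg () =>
      rw [letterDeg_neg]
      rcases le_or_gt d 0 with hd | hd
      · rw [neg_cons_zw hd]
        exact DCongr.refl _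
      · have h := pos_cons_zw (i := -1 + d) (by omega)
        rw [add_neg_cancel_left] at h
        rw [← h]
        exact congr_cancel_neg_pos_pre _ _ _ _

/-- A suffix can be replaced by the reduced word with the same exponent sum. -/
theorem congr_zw_suf (p s : List (Letter Unit)) (c : Letter Unit) :
    DCongr (rel Unit) ⟨p, c, s⟩ ⟨p, c, zw (wordDeg s)⟩ := by
  induction s using List.reverseRecOn with
  | nil => exact DCongr.refl _
  | append_singleton s y ih =>
    refine (congr_append_suf [y] ih).trans ?_
    rw [wordDeg_append, wordDeg_cons, wordDeg_nil, add_zero]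
    generalize wordDeg s = d
    match y with
    | Letter.e =>
      rw [letterDeg_e, add_zero]
      exact congr_suf_e _ _ _
    | Letter.pos () =>
      rw [letterDeg_pos]
      rcases le_or_gt 0 d with hd | hd
      · rw [zw_append_pos hd]
        exact DCongr.refl _
      · have h := zw_append_neg (i := d + 1) (by omega)
        rw [add_neg_cancel_right] at h
        rw [← h, List.append_assoc]
        exact congr_cancel_neg_pos_suf _ _ _ _
    | Letter.neg () =>
      rw [letterDeg_neg]
      rcases le_or_gt d 0 with hd | hd
      · rw [zw_append_neg hd]
        exact DCongr.refl _
      · have h := zw_append_pos (i := d + -1) (by omega)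
        rw [neg_add_cancel_right] at h
        rw [← h, List.append_assoc]
        exact congr_cancel_pos_neg_suf _ _ _ _

theorem congr_of_wordDeg_eq {p q s t : List (Letter Unit)} (c : Letter Unit)
    (hp : wordDeg p = wordDeg q) (hs : wordDeg s = wordDeg t) :
    DCongr (rel Unit) ⟨p, c, s⟩ ⟨q, c, t⟩ := by
  have h₁ := (congr_zw_pre p s c).trans (congr_zw_suf _ s c)
  have h₂ := (congr_zw_pre q t c).trans (congr_zw_suf _ t c)
  rw [hp, hs] at h₁
  exact h₁.trans h₂.symm

theorem congr_of_haloCoord_eq_none (p s : List (Letter Unit)) {c : Letter Unit}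
    (hc : haloCoord (wordDeg p) c = none) :
    DCongr (rel Unit) ⟨p, c, s⟩ ⟨[], Letter.e, zw (coord ⟨p, c, s⟩).1⟩ := by
  rw [coord_mk]
  cases c with
  | pos => simp [haloCoord] at hc
  | e =>
    exact (congr_pre_e p s).trans (congr_of_wordDeg_eq _ rfl (by simp))
  | neg x =>
    exact ((congr_neg_cen x p s).trans (congr_pre_e _ s)).trans
      (congr_of_wordDeg_eq _ rfl (by simp))

theorem congr_of_coord_eq {a b : FD (Letter Unit)} (h : coord a = coord b) :
    DCongr (rel Unit) a b := by
  obtain ⟨p, c, s⟩ := a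
  obtain ⟨q, d, t⟩ := b
  rcases hc : haloCoord (wordDeg p) c with _ | i
  · have hd : haloCoord (wordDeg q) d = none := by
      rw [← hc]
      exact (congrArg Prod.snd h).symm
    have h₁ := congr_of_haloCoord_eq_none p s hc
    rw [h] at h₁
    exact h₁.trans (congr_of_haloCoord_eq_none q t hd).symm
  · rw [coord_mk, coord_mk] at h
    match c, d with
    | Letter.pos (), Letter.pos () =>
      simp only [haloCoord, Prod.mk.injEq, Option.some.injEq] at h
      exact congr_of_wordDeg_eq _ h.2 (by linarith [h.1, h.2])
    | Letter.pos (), Letter.neg _ => simp [haloCoord] at h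
    | Letter.pos (), Letter.e => simp [haloCoord] at h
    | Letter.neg _, _ => simp [haloCoord] at hc
    | Letter.e, _ => simp [haloCoord] at hc

theorem cls_eq_cls_iff {a b : FD (Letter Unit)} : cls a = cls b ↔ coord a = coord b := by
  refine ⟨fun h => ?_, fun h => Quot.sound (congr_of_coord_eq h)⟩
  exact congrArg (Quot.lift coord fun _ _ => coord_eq_of_congr) h

theorem cls_surjective (c : DQ Unit) : ∃ a, cls a = c := Quot.exists_rep c

theorem vd_cls (a b : FD (Letter Unit)) : DQ.vd (cls a) (cls b) = cls (a.vd b) := rfl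

theorem dv_cls (a b : FD (Letter Unit)) : DQ.dv (cls a) (cls b) = cls (a.dv b) := rfl

/-- The normal form with given coordinates. -/
def normalForm : ℤ × Option ℤ → FD (Letter Unit)
  | (n, some i) => ⟨zw i, Letter.pos (), zw (n - 1 - i)⟩
  | (n, none) =>
    if 0 ≤ n then ⟨[], Letter.e, List.replicate n.toNat (Letter.pos ())⟩
    else ⟨[], Letter.neg (), List.replicate ((-n).toNat - 1) (Letter.neg ())⟩

theorem coord_normalForm (v : ℤ × Option ℤ) : coord (normalForm v) = v := by
  obtain ⟨n, _ | i⟩ := v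
  · rw [normalForm]
    split_ifs <;> simp [coord_mk, haloCoord] <;> omega
  · simp only [normalForm, coord_mk, haloCoord, wordDeg_zw, letterDeg_pos, Prod.mk.injEq, and_true]
    ring

theorem normalForm_mem (v : ℤ × Option ℤ) : normalForm v ∈ OmE1 ∪ OmX1 ∪ OmI1 := by
  obtain ⟨n, _ | i⟩ := v
  · rw [normalForm]
    split_ifs with hn
    · exact .inl (.inl ⟨_, rfl⟩)
    · exact .inr ⟨_, by omega, rfl⟩
  · exact .inl (.inr ⟨_, _, rfl⟩)

theorem normalForm_coord {a : FD (Letter Unit)} (ha : a ∈ OmE1 ∪ OmX1 ∪ OmI1) :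
    normalForm (coord a) = a := by
  rcases ha with (⟨n, rfl⟩ | ⟨i, j, rfl⟩) | ⟨m, hm, rfl⟩
  · simp [coord_mk, haloCoord, normalForm]
  · simp only [coord_mk, haloCoord, normalForm, wordDeg_zw, letterDeg_pos]
    congr 2
    ring
  · obtain ⟨k, rfl⟩ : ∃ k, m = k + 1 := ⟨m - 1, by omega⟩
    have hk : ¬ (0 : ℤ) ≤ -1 + -k := by omega
    have hk_toNat : (-(-1 + -k : ℤ)).toNat - 1 = k := by omega
    simp only [coord_mk, haloCoord, normalForm, wordDeg_nil, wordDeg_replicate, letterDeg_neg,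
      zero_add, add_tsub_cancel_right, mul_neg, mul_one, if_neg hk, hk_toNat]

/-- The free digroup on the one-element set {x}: every element is the class of
exactly one element of Ω_e ∪ Ω_x ∪ Ω_{x⁻¹}; the group part J is
{[ex^n]₁ : n ≥ 0} ∪ {[x^{−m}]₁ : m ≥ 1}; the halo E is
{[e]₁} ∪ {[x^{−n}x^n]_{n+1} : n ≥ 1} ∪ {[x^n x^{−n}]_n : n ≥ 1}. -/
theorem one_generator_free_digroup :
    (∀ c : DQ Unit, ∃! a : FD (Letter Unit), a ∈ OmE1 ∪ OmX1 ∪ OmI1 ∧ cls a = c) ∧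
    ({b : DQ Unit | ∃ a : DQ Unit, DQ.vd a b = unitE Unit ∧ DQ.dv b a = unitE Unit} =
      {c : DQ Unit |
        (∃ n : ℕ, c = cls ⟨[], Letter.e, List.replicate n (Letter.pos ())⟩) ∨
        (∃ m : ℕ, 1 ≤ m ∧
          c = cls ⟨[], Letter.neg (), List.replicate (m - 1) (Letter.neg ())⟩)}) ∧
    ({h : DQ Unit | ∀ a : DQ Unit, DQ.vd h a = a ∧ DQ.dv a h = a} =
      {c : DQ Unit | c = unitE Unit ∨
        (∃ n : ℕ, 1 ≤ n ∧ c = cls ⟨List.replicate n (Letter.neg ()), Letter.pos (),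
          List.replicate (n - 1) (Letter.pos ())⟩) ∨
        (∃ n : ℕ, 1 ≤ n ∧ c = cls ⟨List.replicate (n - 1) (Letter.pos ()), Letter.pos (),
          List.replicate n (Letter.neg ())⟩)}) := by
  refine ⟨fun c => ?_, ?_, ?_⟩
  · obtain ⟨a, rfl⟩ := cls_surjective c
    refine ⟨normalForm (coord a), ⟨normalForm_mem _, cls_eq_cls_iff.2 (coord_normalForm _)⟩, ?_⟩
    rintro b ⟨hb, hab⟩
    rw [← cls_eq_cls_iff.1 hab, normalForm_coord hb]
  · ext c
    obtain ⟨b, rfl⟩ := cls_surjective c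
    simp only [Set.mem_ofPred_eq, unitE, cls_eq_cls_iff]
    constructor
    · rintro ⟨c, h, -⟩
      obtain ⟨a, rfl⟩ := cls_surjective c
      rw [vd_cls, cls_eq_cls_iff, coord_vd] at h
      have hb : (coord b).2 = none := by simpa [coord_mk, haloCoord] using congrArg Prod.snd h
      rcases le_or_gt 0 (coord b).1 with hn | hn
      · refine .inl ⟨(coord b).1.toNat, Prod.ext ?_ (by simp [coord_mk, haloCoord, hb])⟩
        simp [coord_mk]; omega
      · refine .inr ⟨(-(coord b).1).toNat, by omega,
          Prod.ext ?_ (by simp [coord_mk, haloCoord, hb])⟩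
        simp [coord_mk]; omega
    · intro h
      have hb : (coord b).2 = none := by
        rcases h with ⟨n, h⟩ | ⟨m, -, h⟩ <;> simp [h, coord_mk, haloCoord]
      refine ⟨cls (normalForm (-(coord b).1, none)), ?_, ?_⟩
      · rw [vd_cls, cls_eq_cls_iff, coord_vd, coord_normalForm]
        simp [hb, coord_mk, haloCoord]
      · rw [dv_cls, cls_eq_cls_iff, coord_dv, coord_normalForm]
        simp [hb, coord_mk, haloCoord]
  · ext c
    obtain ⟨b, rfl⟩ := cls_surjective c
    simp only [Set.mem_ofPred_eq, unitE, cls_eq_cls_iff]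
    constructor
    · intro h
      have h₁ := (h (unitE Unit)).2
      rw [unitE, dv_cls, cls_eq_cls_iff, coord_dv] at h₁
      have hb : (coord b).1 = 0 := by simpa [coord_mk] using congrArg Prod.fst h₁
      rcases ht : (coord b).2 with _ | i
      · exact .inl (Prod.ext (by simp [coord_mk, hb]) (by simp [coord_mk, haloCoord, ht]))
      · rcases le_or_gt 0 i with hi | hi
        · refine .inr (.inr ⟨i.toNat + 1, by omega, Prod.ext ?_ ?_⟩)
          · simp [coord_mk, hb]
          · simp [coord_mk, haloCoord, ht, hi]
        · refine .inr (.inl ⟨(-i).toNat, by omega, Prod.ext ?_ ?_⟩)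
          · simp [coord_mk, hb]; omega
          · simp [coord_mk, haloCoord, ht]; omega
    · intro h c
      have hb : (coord b).1 = 0 := by
        rcases h with h | ⟨n, hn, h⟩ | ⟨n, hn, h⟩ <;> simp [h, coord_mk] <;> omega
      obtain ⟨a, rfl⟩ := cls_surjective c
      rw [vd_cls, dv_cls, cls_eq_cls_iff, cls_eq_cls_iff, coord_vd, coord_dv]
      simp [hb]
end
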